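/- If K ⊩ τ :: k (the monotype τ has kind k under the kinding environment K), and the kinded substitution (K₁, S) respects K, then K₁ ⊩ S(τ) :: S(k). -/

import Mathlib

/-- EVL monotypes: type variables, base types, arrow types, record types. -/
inductive MonoTy : Type where
  | tvar : Nat → MonoTy
  | base : Nat → MonoTy
  | arrow : MonoTy → MonoTy → MonoTy
  | record : List (String × MonoTy) → MonoTy

/-- EVL kinds: the universal kind U and record kinds. -/
inductive Kind : Type where
  | univ : Kind
  | recK : List (String × MonoTy) → Kind

/-- A substitution: a (partial) map from type variables to monotypes. -/
abbrev Subst := Nat → Option MonoTy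

/-- A kinding environment: a (partial) map from type variables to kinds. -/
abbrev KEnv := Nat → Option Kind

def substVar (S : Subst) (a : Nat) : MonoTy := (S a).getD (.tvar a)

/-- Apply a substitution to a monotype. -/
def applyMono (S : Subst) : MonoTy → MonoTy
  | .tvar a => substVar S a
  | .base b => .base b
  | .arrow t u => .arrow (applyMono S t) (applyMono S u)
  | .record fs => .record (fs.attach.map fun p => (p.1.1, applyMono S p.1.2))
termination_by t => sizeOf t
decreasing_by
  · simp; try omega
  · simp; try omega
  · have h := List.sizeOf_lt_of_mem p.2
    have h2 : sizeOf (p.1).2 < sizeOf p.1 := by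
      obtain ⟨⟨a, b⟩, hq⟩ := p
      simp <;> omega
    have h3 : sizeOf (MonoTy.record fs) = 1 + sizeOf fs := by simp
    omega

/-- Apply a substitution to a kind. -/
def applyKind (S : Subst) : Kind → Kind
  | .univ => .univ
  | .recK fs => .recK (fs.map fun p => (p.1, applyMono S p.2))

/-- Free type variables of a monotype (as a membership predicate). -/
inductive MemFTV : Nat → MonoTy → Prop where
  | tvar (a : Nat) : MemFTV a (.tvar a)
  | arrowL : MemFTV a t → MemFTV a (.arrow t u)
  | arrowR : MemFTV a u → MemFTV a (.arrow t u)
  | record : (l, t) ∈ fs → MemFTV a t → MemFTV a (.record fs)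

/-- Free type variables of a kind. -/
def MemFTVKind (a : Nat) : Kind → Prop
  | .univ => False
  | .recK fs => ∃ p ∈ fs, MemFTV a p.2

/-- A monotype is well-formed under `K` if all its free type variables are in `dom K`. -/
def WFMono (K : KEnv) (t : MonoTy) : Prop := ∀ a, MemFTV a t → (K a).isSome

/-- A kind is well-formed under `K`. -/
def WFKind (K : KEnv) (k : Kind) : Prop := ∀ a, MemFTVKind a k → (K a).isSome

/-- The kinding judgement `K ⊩ τ :: k`. -/
inductive HasKind (K : KEnv) : MonoTy → Kind → Prop where
  | univ : WFMono K t → HasKind K t .univ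
  | tvar : K a = some (.recK fs') → (∀ p ∈ fs, p ∈ fs') → HasKind K (.tvar a) (.recK fs)
  | record : WFMono K (.record fs') → (∀ p ∈ fs, p ∈ fs') →
      HasKind K (.record fs') (.recK fs)

/-- `S` is well-formed under `K`: `S α` is well-formed under `K` for every `α ∈ dom S`
(so `(K, S)` is a kinded substitution). -/
def WFSubst (K : KEnv) (S : Subst) : Prop := ∀ a t, S a = some t → WFMono K t

/-- The kinded substitution `(K₁, S)` respects `K₂`. -/
def Respects (K1 : KEnv) (S : Subst) (K2 : KEnv) : Prop :=
  WFSubst K1 S ∧ ∀ a k, K2 a = some k → HasKind K1 (substVar S a) (applyKind S k)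

/-- EVL type schemes `∀α₁::k₁ ⋯ ∀αₙ::kₙ.τ`, given by the quantifier prefix and the body. -/
structure Ty : Type where
  binds : List (Nat × Kind)
  body : MonoTy

/-- Free type variables of a type scheme. -/
def MemFTVTy (a : Nat) (σ : Ty) : Prop :=
  (MemFTV a σ.body ∨ ∃ p ∈ σ.binds, MemFTVKind a p.2) ∧ a ∉ σ.binds.map Prod.fst

/-- Restrict a substitution away from a list of (bound) variables. -/
def restrictSubst (S : Subst) (bs : List Nat) : Subst :=
  fun a => if a ∈ bs then none else S a

/-- Apply a substitution to a type scheme (bound variables are not affected,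
following the bound type variable convention). -/
def applyTy (S : Subst) (σ : Ty) : Ty :=
  let S' := restrictSubst S (σ.binds.map Prod.fst)
  ⟨σ.binds.map (fun p => (p.1, applyKind S' p.2)), applyMono S' σ.body⟩

/-- Well-formedness of a type scheme under a kinding environment. -/
def WFTy (K : KEnv) (σ : Ty) : Prop := ∀ a, MemFTVTy a σ → (K a).isSome

/-!
The free variables of `S τ` are those of the `S α` for `α` free in `τ`. If `(K₁, S)` respects `K`,
then for `α ∈ dom K` the type `S α` has a kind under `K₁`, so it is well-formed under `K₁`; hence
`S` carries types well-formed under `K` to types well-formed under `K₁`. Record kinds can be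
weakened to fewer fields, and `S` preserves inclusions of field lists.
-/

theorem applyMono_record (S : Subst) (fs : List (String × MonoTy)) :
    applyMono S (.record fs) = .record (fs.map fun p => (p.1, applyMono S p.2)) := by
  rw [applyMono, List.attach_map_val (f := fun p : String × MonoTy => (p.1, applyMono S p.2))]

@[elab_as_elim]
theorem MonoTy.induction_on_fields {motive : MonoTy → Prop}
    (tvar : ∀ a, motive (.tvar a)) (base : ∀ b, motive (.base b))
    (arrow : ∀ t u, motive t → motive u → motive (.arrow t u))
    (record : ∀ fs, (∀ p ∈ fs, motive p.2) → motive (.record fs)) (t : MonoTy) : motive t :=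
  MonoTy.rec (motive_2 := fun fs => ∀ p ∈ fs, motive p.2) (motive_3 := fun p => motive p.2)
    tvar base arrow record (List.forall_mem_nil _)
    (fun _ _ head tail => List.forall_mem_cons.2 ⟨head, tail⟩) (fun _ _ ht => ht) t

section FreeVariables

variable {a b : Nat}

theorem memFTV_tvar_iff : MemFTV a (.tvar b) ↔ a = b :=
  ⟨fun | .tvar _ => rfl, fun | rfl => .tvar a⟩

theorem not_memFTV_base : ¬MemFTV a (.base b) := nofun

theorem memFTV_arrow_iff {t u : MonoTy} : MemFTV a (.arrow t u) ↔ MemFTV a t ∨ MemFTV a u :=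
  ⟨fun | .arrowL ht => .inl ht | .arrowR hu => .inr hu, Or.rec .arrowL .arrowR⟩

theorem memFTV_record_iff {fs : List (String × MonoTy)} :
    MemFTV a (.record fs) ↔ ∃ p ∈ fs, MemFTV a p.2 :=
  ⟨fun | .record hmem ha => ⟨_, hmem, ha⟩, fun ⟨_, hmem, ha⟩ => .record hmem ha⟩

theorem memFTV_applyMono_iff {S : Subst} {t : MonoTy} :
    MemFTV b (applyMono S t) ↔ ∃ a, MemFTV a t ∧ MemFTV b (substVar S a) := by
  induction t using MonoTy.induction_on_fields with
  | tvar c => simp only [applyMono, memFTV_tvar_iff, exists_eq_left]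
  | base c => simp only [applyMono, not_memFTV_base, false_and, exists_false]
  | arrow t u iht ihu =>
    simp only [applyMono, memFTV_arrow_iff, iht, ihu, or_and_right, exists_or]
  | record fs ih =>
    calc MemFTV b (applyMono S (.record fs))
      _ ↔ ∃ p ∈ fs, MemFTV b (applyMono S p.2) := by
        simp only [applyMono_record, memFTV_record_iff, List.mem_map, exists_exists_and_eq_and]
      _ ↔ ∃ p ∈ fs, ∃ a, MemFTV a p.2 ∧ MemFTV b (substVar S a) :=
        exists_congr fun p => and_congr_right (ih p)
      _ ↔ ∃ a, MemFTV a (.record fs) ∧ MemFTV b (substVar S a) := by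
        simp only [memFTV_record_iff]
        tauto

end FreeVariables

section Kinding

variable {K K₁ : KEnv} {S : Subst} {t : MonoTy}

theorem wfMono_tvar_iff {a : Nat} : WFMono K (.tvar a) ↔ (K a).isSome := by
  simp only [WFMono, memFTV_tvar_iff, forall_eq]

theorem wfMono_applyMono_iff :
    WFMono K (applyMono S t) ↔ ∀ a, MemFTV a t → WFMono K (substVar S a) := by
  simp only [WFMono, memFTV_applyMono_iff, forall_exists_index, and_imp]
  exact ⟨fun h a ha b => h b a ha, fun h b a ha => h a ha b⟩

theorem HasKind.wfMono {k : Kind} (h : HasKind K t k) : WFMono K t := by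
  cases h with
  | univ hwf => exact hwf
  | tvar hK _ => exact wfMono_tvar_iff.2 (Option.isSome_of_eq_some hK)
  | record hwf _ => exact hwf

theorem HasKind.recK_of_subset {fs fs' : List (String × MonoTy)}
    (h : HasKind K t (.recK fs')) (hsub : fs ⊆ fs') : HasKind K t (.recK fs) := by
  cases h with
  | tvar hK hfs' => exact .tvar hK (List.Subset.trans hsub hfs')
  | record hwf hfs' => exact .record hwf (List.Subset.trans hsub hfs')

theorem WFMono.applyMono_of_respects (h : WFMono K t) (hresp : Respects K₁ S K) :
    WFMono K₁ (applyMono S t) := by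
  refine wfMono_applyMono_iff.2 fun a ha => ?_
  obtain ⟨k, hk⟩ := Option.isSome_iff_exists.1 (h a ha)
  exact (hresp.2 a k hk).wfMono

end Kinding

/-- If `K ⊩ τ :: k` (the monotype `τ` has kind `k` under the kinding
environment `K`) and the kinded substitution `(K₁, S)` respects `K`, then
`K₁ ⊩ S(τ) :: S(k)`. -/
theorem hasKind_subst_of_respects
    (K K₁ : KEnv) (S : Subst) (τ : MonoTy) (k : Kind)
    (h : HasKind K τ k)
    (hresp : Respects K₁ S K) :
    HasKind K₁ (applyMono S τ) (applyKind S k) := by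
  cases h with
  | univ hwf => exact .univ (hwf.applyMono_of_respects hresp)
  | tvar hK hsub =>
    rw [applyMono]
    exact (hresp.2 _ _ hK).recK_of_subset (List.map_subset _ hsub)
  | record hwf hsub =>
    have hwf' := hwf.applyMono_of_respects hresp
    rw [applyMono_record] at hwf' ⊢
    exact .record hwf' (List.map_subset _ hsub)
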